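/- arXiv:math-ph/0112013 — 3 statements merged into one kernel-verified Lean document; each statement's English description precedes it below -/
import Mathlib

section
/- For every k ≥ 0, the F_k cyclic rotations of the Fibonacci word s_k are mutually distinct; that is, if rotating s_k by i positions and by j positions (0 ≤ i, j < F_k) give the same word, then i = j. -/
/-- The Fibonacci substitution `S` on the alphabet `{0,1}` (encoded as `Bool`,
with `false` for `0` and `true` for `1`): `S(0) = 1`, `S(1) = 10`. -/
def fibS : Bool → List Bool
  | false => [true]
  | true => [true, false]

/-- The Fibonacci words `s_k = S^k(1)`; the word `s_k` has length `F_k = Nat.fib (k + 2)`. -/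
def fibWord : ℕ → List Bool
  | 0 => [true]
  | k + 1 => (fibWord k).flatMap fibS

theorem flatMap_fibS_counts (l : List Bool) :
    (l.flatMap fibS).length = l.length + l.count true ∧
      (l.flatMap fibS).count true = l.length := by
  induction l with
  | nil => simp
  | cons x l ih =>
    obtain ⟨h1, h2⟩ := ih
    cases x <;> simp [fibS, h1, h2] <;> omega

theorem fibWord_counts (k : ℕ) :
    (fibWord k).length = Nat.fib (k + 2) ∧ (fibWord k).count true = Nat.fib (k + 1) := by
  induction k with
  | zero => simp [fibWord]
  | succ k ih =>
    obtain ⟨h1, h2⟩ := flatMap_fibS_counts (fibWord k)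
    have h3 := Nat.fib_add_two (n := k + 1)
    simp only [fibWord]
    rw [h1, h2, ih.1, ih.2]
    refine ⟨?_, rfl⟩
    rw [h3]
    exact Nat.add_comm _ _

/-- Commuting words have proportional letter counts. -/
theorem commuting_counts (N : ℕ) : ∀ a b : List Bool, a.length + b.length ≤ N →
    a ++ b = b ++ a → b.length * a.count true = a.length * b.count true := by
  induction N with
  | zero =>
    intro a b h _
    have ha : a = [] := List.length_eq_zero_iff.mp (by omega)
    subst ha
    simp
  | succ N ih =>
    have key : ∀ a b : List Bool, a.length + b.length ≤ N + 1 → a.length ≤ b.length →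
        a ++ b = b ++ a → b.length * a.count true = a.length * b.count true := by
      intro a b h hl hab
      obtain ⟨c, rfl⟩ : a <+: b :=
        List.prefix_of_prefix_length_le ⟨b, hab⟩ ⟨a, rfl⟩ hl
      rcases a with _ | ⟨x, a⟩
      · simp
      · have hc := ih (x :: a) c (by simp at h ⊢; omega) (by
          rw [List.append_assoc] at hab
          exact List.append_cancel_left hab)
        rw [List.length_append, List.count_append, Nat.add_mul, Nat.mul_add, hc]
    intro a b h hab
    rcases le_total a.length b.length with hl | hl
    · exact key a b h hl hab
    · exact (key b a (by omega) hl hab.symm).symm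

theorem fibWord_rotate_eq_self (k d : ℕ) (hd : d < Nat.fib (k + 2))
    (h : (fibWord k).rotate d = fibWord k) : d = 0 := by
  obtain ⟨h1, h2⟩ := fibWord_counts k
  rw [List.rotate_eq_drop_append_take (by omega)] at h
  have ht := List.take_append_drop d (fibWord k)
  have hc := commuting_counts _ _ _ le_rfl (ht.trans h.symm)
  have hn : ((fibWord k).take d).length + ((fibWord k).drop d).length = Nat.fib (k + 2) := by
    rw [← List.length_append, ht, h1]
  have hT : ((fibWord k).take d).count true + ((fibWord k).drop d).count true
      = Nat.fib (k + 1) := by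
    rw [← List.count_append, ht, h2]
  have hl : ((fibWord k).take d).length = d := by simp; omega
  rw [hl] at hn hc
  have hdvd : Nat.fib (k + 2) ∣ d * Nat.fib (k + 1) :=
    ⟨((fibWord k).take d).count true, by rw [← hn, ← hT, Nat.add_mul, Nat.mul_add, hc]⟩
  have hcop : Nat.Coprime (Nat.fib (k + 2)) (Nat.fib (k + 1)) :=
    (Nat.fib_coprime_fib_succ (k + 1)).symm
  exact Nat.eq_zero_of_dvd_of_lt (hcop.dvd_of_dvd_mul_right hdvd) hd

theorem fibWord_rotate_le (k i j : ℕ) (hij : i ≤ j) (hj : j < Nat.fib (k + 2))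
    (h : (fibWord k).rotate i = (fibWord k).rotate j) : i = j := by
  have h' : ((fibWord k).rotate (j - i)).rotate i = (fibWord k).rotate i := by
    rw [List.rotate_rotate, Nat.sub_add_cancel hij, h]
  have := fibWord_rotate_eq_self k (j - i) (by omega) (List.rotate_injective i h')
  omega

/-- For every `k ≥ 0`, the `F_k` cyclic rotations of `s_k` are mutually distinct:
if rotating `s_k` by `i` positions and by `j` positions (`0 ≤ i, j < F_k`) give the
same word, then `i = j`.  (Here `F_k = Nat.fib (k + 2)` and
`u.rotate i = u_{i+1} ... u_n u_1 ... u_i`.) -/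
theorem fibWord_rotations_distinct (k : ℕ) :
    ∀ i j, i < Nat.fib (k + 2) → j < Nat.fib (k + 2) →
      (fibWord k).rotate i = (fibWord k).rotate j → i = j := by
  intro i j hi hj h
  rcases le_total i j with hij | hij
  · exact fibWord_rotate_le k i j hij hj h
  · exact (fibWord_rotate_le k j i hij hi h.symm).symm
end

section
/- For every k ≥ 0, a word u of length F_k over {0,1} is a factor of the infinite Fibonacci word w if and only if u is one of the F_k (mutually distinct) cyclic rotations of s_k, or u equals the word b_k obtained by prepending the flip of the last letter of s_k to the first F_k − 1 letters of s_k; in particular the set of factors of w of length F_k has exactly F_k + 1 elements. -/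
/-- The word `b_k`, obtained by prepending the flip of the last letter of `s_k`
to the first `F_k - 1` letters of `s_k`. -/
def fibB (k : ℕ) : List Bool := (!((fibWord k).getLastD false)) :: (fibWord k).dropLast

/-- `S^k(0)`. -/
def fibT : ℕ → List Bool
  | 0 => [false]
  | k + 1 => (fibT k).flatMap fibS

theorem fibT_succ (k : ℕ) : fibT (k + 1) = fibWord k := by
  induction k with
  | zero => rfl
  | succ k ih => rw [fibT, ih]; rfl

theorem fibWord_succ (k : ℕ) : fibWord (k + 1) = fibWord k ++ fibT k := by
  induction k with
  | zero => rfl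
  | succ k ih =>
    have e : fibWord (k + 1 + 1) = (fibWord (k + 1)).flatMap fibS := rfl
    rw [e, ih, List.flatMap_append, ← ih]; rfl

/-- `S^k` applied to a word. -/
def fibG (k : ℕ) (x : List Bool) : List Bool :=
  x.flatMap (fun c => if c then fibWord k else fibT k)

theorem fibG_zero (x : List Bool) : fibG 0 x = x := by
  induction x with
  | nil => rfl
  | cons c x ih =>
    unfold fibG at ih ⊢
    rw [List.flatMap_cons, ih]
    cases c <;> rfl

theorem fibG_succ (k : ℕ) (x : List Bool) : fibG (k + 1) x = (fibG k x).flatMap fibS := by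
  induction x with
  | nil => rfl
  | cons c x ih =>
    unfold fibG at ih ⊢
    rw [List.flatMap_cons, List.flatMap_cons, List.flatMap_append, ih]
    cases c <;> rfl

theorem fibWord_add (m k : ℕ) : fibWord (m + k) = fibG k (fibWord m) := by
  induction k with
  | zero => rw [fibG_zero]; rfl
  | succ k ih => rw [fibG_succ, ← ih]; rfl

theorem fibG_infix (k : ℕ) {x y : List Bool} (h : x <:+: y) : fibG k x <:+: fibG k y := by
  obtain ⟨p, s, rfl⟩ := h
  exact ⟨fibG k p, fibG k s, by simp [fibG]⟩

theorem fibWord_prefix_add (m k : ℕ) : fibWord m <+: fibWord (m + k) := by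
  induction k with
  | zero => exact List.prefix_rfl
  | succ k ih =>
    refine ih.trans ?_
    rw [← add_assoc, fibWord_succ]
    exact List.prefix_append _ _

theorem counts (k : ℕ) :
    ((fibWord k).length = Nat.fib (k + 2) ∧ (fibWord k).count true = Nat.fib (k + 1)) ∧
    ((fibT k).length = Nat.fib (k + 1) ∧ (fibT k).count true = Nat.fib k) := by
  induction k with
  | zero => decide
  | succ k ih =>
    obtain ⟨⟨h1, h2⟩, h3, h4⟩ := ih
    rw [fibT_succ, fibWord_succ]
    refine ⟨⟨?_, ?_⟩, h1, h2⟩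
    · rw [List.length_append, h1, h3, Nat.fib_add_two (n := k + 1)]; ring
    · rw [List.count_append, h2, h4, Nat.fib_add_two (n := k)]; ring

theorem invariant (k : ℕ) : ∃ P x, fibWord k ++ fibT k = P ++ [x, !x] ∧
    fibT k ++ fibWord k = P ++ [!x, x] ∧ P <+: fibWord k ++ fibWord k := by
  induction k with
  | zero => exact ⟨[], true, rfl, rfl, List.nil_prefix⟩
  | succ k ih =>
    obtain ⟨P, x, h1, h2, h3⟩ := ih
    refine ⟨fibWord k ++ P, !x, ?_, ?_, ?_⟩
    · rw [fibT_succ, fibWord_succ, List.append_assoc, h2]; simp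
    · rw [fibT_succ, fibWord_succ, h1]; simp
    · rw [fibWord_succ]
      refine ⟨[!x, x] ++ fibT k, ?_⟩
      have : fibWord k ++ fibT k ++ (fibWord k ++ fibT k)
        = fibWord k ++ (fibT k ++ fibWord k) ++ fibT k := by simp
      rw [this, h2]; simp

theorem shape (k : ℕ) : ∃ A B x, fibWord k = A ++ [x] ∧ fibT k = B ++ [!x] ∧
    ∃ P, fibT k ++ fibWord k = P ++ [!x, x] ∧ P <+: fibWord k ++ fibWord k := by
  obtain ⟨P, x, h1, h2, h3⟩ := invariant k
  have c := counts k
  have e1 : fibWord k ≠ [] := by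
    intro h; have := c.1.1; rw [h] at this
    have := Nat.fib_pos.2 (show 0 < k + 2 by omega)
    rw [List.length_nil] at *; omega
  have e2 : fibT k ≠ [] := by
    intro h; have := c.2.1; rw [h] at this
    have := Nat.fib_pos.2 (show 0 < k + 1 by omega)
    rw [List.length_nil] at *; omega
  obtain ⟨A, a, hA⟩ := List.eq_nil_or_concat' (fibWord k) |>.resolve_left e1
  obtain ⟨B, b, hB⟩ := List.eq_nil_or_concat' (fibT k) |>.resolve_left e2
  have ha : a = x := by
    have := congrArg List.getLast? h2
    rw [hA] at this; simpa using this
  have hb : b = !x := by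
    have := congrArg List.getLast? h1
    rw [hB] at this; simpa using this
  subst ha; subst hb
  exact ⟨A, B, a, hA, hB, P, h2, h3⟩

theorem rot_of_infix (A u : List Bool) (hu : u.length = A.length) (hA : 0 < A.length)
    (h : u <:+: A ++ (A ++ A)) : ∃ i < A.length, u = A.rotate i := by
  obtain ⟨p, s, h⟩ := h
  refine ⟨p.length % A.length, Nat.mod_lt _ hA, ?_⟩
  rw [List.rotate_mod]
  have hl := congrArg List.length h
  simp only [List.length_append] at hl
  have key : ∀ i (hi : i < (A ++ (A ++ A)).length),
      (A ++ (A ++ A))[i] = A[i % A.length]'(Nat.mod_lt _ hA) := by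
    intro i hi
    simp only [List.length_append] at hi
    simp only [List.getElem_append]
    split_ifs with h1 h2
    · congr 1; exact (Nat.mod_eq_of_lt h1).symm
    · congr 1
      rw [Nat.mod_eq_sub_mod (by omega), Nat.mod_eq_of_lt h2]
    · congr 1
      rw [Nat.mod_eq_sub_mod (by omega), Nat.mod_eq_sub_mod (by omega), Nat.mod_eq_of_lt]
      omega
  refine List.ext_getElem (by simp [hu]) ?_
  intro j h1 h2
  rw [List.getElem_rotate]
  have hk := key (p.length + j) (by simp only [List.length_append]; omega)
  have : u[j] = (A ++ (A ++ A))[p.length + j]'(by simp only [List.length_append]; omega) := by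
    simp only [← h]
    rw [List.getElem_append_left (by simp; omega), List.getElem_append_right (by omega)]
    simp
  rw [this, hk]
  congr 1
  rw [add_comm]

theorem infix_of_rot (A : List Bool) (i : ℕ) (hi : i < A.length) : A.rotate i <:+: A ++ A := by
  rw [List.rotate_eq_drop_append_take hi.le]
  refine ⟨A.take i, A.drop i, ?_⟩
  rw [← List.append_assoc, List.take_append_drop, List.append_assoc, List.take_append_drop]

theorem fibB_eq {k : ℕ} {A : List Bool} {x : Bool} (h : fibWord k = A ++ [x]) :
    fibB k = (!x) :: A := by
  rw [fibB, h]; simp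

theorem local_ABA (k : ℕ) (u : List Bool) (hu : u.length = Nat.fib (k + 2))
    (h : u <:+: fibWord k ++ (fibT k ++ fibWord k)) :
    (∃ i < Nat.fib (k + 2), u = (fibWord k).rotate i) ∨ u = fibB k := by
  obtain ⟨A, B, x, hA, hB, P, hP, hPA⟩ := shape k
  have hl := (counts k).1.1
  have hpos : 0 < Nat.fib (k + 2) := Nat.fib_pos.2 (by omega)
  have e : fibWord k ++ (fibT k ++ fibWord k) = (fibWord k ++ P ++ [!x]) ++ [x] := by
    rw [hP]; simp
  have e2 : fibWord k ++ P ++ [!x] = (fibWord k ++ B) ++ fibB k := by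
    have : (fibWord k ++ P ++ [!x]) ++ [x] = ((fibWord k ++ B) ++ fibB k) ++ [x] := by
      rw [← e, fibB_eq hA, hB]; nth_rewrite 2 [hA]; simp
    exact List.append_cancel_right this
  have hBl : (fibB k).length = Nat.fib (k + 2) := by
    rw [fibB_eq hA, ← hl, hA]; simp
  rw [e, List.infix_concat_iff] at h
  rcases h with h | h
  · left
    rw [← e] at h
    have h2 : fibWord k <:+ fibWord k ++ (fibT k ++ fibWord k) :=
      ⟨fibWord k ++ fibT k, by simp⟩
    refine ⟨0, hpos, ?_⟩
    rw [List.rotate_zero]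
    exact (List.suffix_of_suffix_length_le h h2 (by omega)).eq_of_length (by omega)
  · rw [List.infix_concat_iff] at h
    rcases h with h | h
    · right
      rw [e2] at h
      exact (List.suffix_of_suffix_length_le h (List.suffix_append _ _)
        (by omega)).eq_of_length (by omega)
    · left
      rw [← hl]
      apply rot_of_infix _ _ (by omega) (by omega)
      exact h.trans ((List.prefix_append_right_inj _).2 hPA).isInfix

theorem infix_split {u g r A : List Bool} (hu : u.length = A.length) (hA : A <+: r)
    (h : u <:+: g ++ r) : u <:+: r ∨ u <:+: g ++ A := by
  rw [List.infix_append_iff] at h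
  rcases h with h | h | ⟨a, b, rfl, ha, hb⟩
  · exact Or.inr (h.trans (List.prefix_append _ _).isInfix)
  · exact Or.inl h
  · right
    have : b <+: A := List.prefix_of_prefix_length_le hb hA (by simp at hu; omega)
    obtain ⟨p, rfl⟩ := ha
    obtain ⟨s, rfl⟩ := this
    exact ⟨p, s, by simp⟩

theorem fibWord_prefix_fibG (k : ℕ) (x : List Bool) :
    fibWord k <+: fibG (k + 1) x ++ fibWord k := by
  cases x with
  | nil => exact List.prefix_rfl
  | cons c x =>
    unfold fibG
    rw [List.flatMap_cons]
    cases c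
    · simp [fibT_succ]
    · simp [fibWord_succ]

theorem global_factor (k : ℕ) (u : List Bool) (hu : u.length = Nat.fib (k + 2))
    (x : List Bool) (h : u <:+: fibG (k + 1) x ++ fibWord k) :
    (∃ i < Nat.fib (k + 2), u = (fibWord k).rotate i) ∨ u = fibB k := by
  have hl := (counts k).1.1
  have hpos : 0 < Nat.fib (k + 2) := Nat.fib_pos.2 (by omega)
  induction x with
  | nil =>
    left
    refine ⟨0, hpos, ?_⟩
    rw [List.rotate_zero]
    exact List.IsInfix.eq_of_length h (by omega)
  | cons c x ih =>
    have e : fibG (k + 1) (c :: x) ++ fibWord k =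
      (if c then fibWord (k + 1) else fibT (k + 1)) ++ (fibG (k + 1) x ++ fibWord k) := by
      simp [fibG]
    rw [e] at h
    rcases infix_split (by omega) (fibWord_prefix_fibG k x) h with h | h
    · exact ih h
    · cases c
      · left
        simp only [fibT_succ] at h
        rw [← hl]
        apply rot_of_infix _ _ (by omega) (by omega)
        exact h.trans (List.suffix_append _ _).isInfix
      · simp only [fibWord_succ, if_true, List.append_assoc] at h
        exact local_ABA k u hu h

theorem factor_iff (k : ℕ) (u : List Bool) (hu : u.length = Nat.fib (k + 2)) :
    (∃ m, u <:+: fibWord m) ↔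
        (∃ i < Nat.fib (k + 2), u = (fibWord k).rotate i) ∨ u = fibB k := by
  constructor
  · rintro ⟨m, h⟩
    apply global_factor k u hu (fibWord m)
    rw [← fibWord_add]
    exact (h.trans (fibWord_prefix_add m (k + 1)).isInfix).trans (List.prefix_append _ _).isInfix
  · rintro (⟨i, hi, rfl⟩ | rfl)
    · refine ⟨3 + k, ?_⟩
      rw [fibWord_add]
      rw [← (counts k).1.1] at hi
      refine (infix_of_rot _ _ hi).trans ?_
      have h0 : [true, true] <:+: fibWord 3 := by decide
      have := fibG_infix k h0
      simpa [fibG] using this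
    · refine ⟨2 + k, ?_⟩
      rw [fibWord_add]
      have e : fibG k (fibWord 2) = fibWord k ++ (fibT k ++ fibWord k) := by
        have : fibWord 2 = [true, false, true] := by decide
        rw [this]; simp [fibG]
      obtain ⟨A, B, x, hA, hB, -⟩ := shape k
      rw [e, fibB_eq hA, hB, hA]
      exact ⟨A ++ [x] ++ B, [x], by simp⟩

theorem comm_count : ∀ (n : ℕ) (p q : List Bool), p.length + q.length ≤ n → p ++ q = q ++ p →
    p.length * q.count true = q.length * p.count true := by
  intro n
  induction n with
  | zero =>
    intro p q h _
    have h1 : p = [] := List.length_eq_zero_iff.1 (by omega)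
    have h2 : q = [] := List.length_eq_zero_iff.1 (by omega)
    simp [h1, h2]
  | succ n ih =>
    have main : ∀ p q : List Bool, p.length + q.length ≤ n + 1 → p ++ q = q ++ p →
        p.length ≤ q.length → p.length * q.count true = q.length * p.count true := by
      intro p q h e hle
      rcases Nat.eq_zero_or_pos p.length with h0 | h0
      · have h1 : p = [] := List.length_eq_zero_iff.1 h0
        simp [h1]
      · have hpq : p <+: q := List.prefix_of_prefix_length_le (List.prefix_append p q)
          (e ▸ List.prefix_append q p) hle
        obtain ⟨r, rfl⟩ := hpq
        rw [List.append_assoc] at e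
        have e2 := List.append_cancel_left e
        simp only [List.length_append] at h
        have := ih p r (by omega) e2
        simp only [List.length_append, List.count_append]
        nlinarith
    intro p q h e
    rcases le_total p.length q.length with hle | hle
    · exact main p q h e hle
    · exact (main q p (by omega) e.symm hle).symm

theorem fibWord_rotate_ne (k d : ℕ) (h0 : 0 < d) (hd : d < Nat.fib (k + 2)) :
    (fibWord k).rotate d ≠ fibWord k := by
  intro h
  obtain ⟨⟨hl, hc⟩, -⟩ := counts k
  rw [List.rotate_eq_drop_append_take (by omega)] at h
  have e : (fibWord k).take d ++ (fibWord k).drop d =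
      (fibWord k).drop d ++ (fibWord k).take d := by rw [h, List.take_append_drop]
  have key := comm_count _ _ _ le_rfl e
  have hcs : ((fibWord k).take d).count true + ((fibWord k).drop d).count true
      = Nat.fib (k + 1) := by
    rw [← List.count_append, List.take_append_drop, hc]
  rw [List.length_take, List.length_drop, hl, min_eq_left hd.le] at key
  have h2 : d * Nat.fib (k + 1) = Nat.fib (k + 2) * ((fibWord k).take d).count true := by
    obtain ⟨t, ht⟩ := Nat.exists_eq_add_of_le hd.le
    rw [ht] at key ⊢
    rw [← hcs]
    rw [Nat.add_sub_cancel_left] at key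
    nlinarith
  have hdvd : Nat.fib (k + 2) ∣ d * Nat.fib (k + 1) := ⟨_, h2⟩
  have cop : Nat.Coprime (Nat.fib (k + 2)) (Nat.fib (k + 1)) :=
    (Nat.fib_coprime_fib_succ (k + 1)).symm
  exact absurd (Nat.le_of_dvd h0 (cop.dvd_of_dvd_mul_right hdvd)) (by omega)

theorem rotate_injOn (k : ℕ) :
    Set.InjOn (fun i => (fibWord k).rotate i) (Set.Iio (Nat.fib (k + 2))) := by
  have main : ∀ i j, i < j → j < Nat.fib (k + 2) →
      (fibWord k).rotate i ≠ (fibWord k).rotate j := by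
    intro i j hij hj h
    obtain ⟨d, rfl⟩ := Nat.exists_eq_add_of_lt hij
    rw [show i + d + 1 = (d + 1) + i by ring, ← List.rotate_rotate] at h
    exact fibWord_rotate_ne k (d + 1) (by omega) (by omega) (List.rotate_injective i h).symm
  intro i hi j hj h
  simp only [Set.mem_Iio] at hi hj
  rcases lt_trichotomy i j with hij | hij | hij
  · exact absurd h (main i j hij hj)
  · exact hij
  · exact absurd h.symm (main j i hij hi)

theorem fibB_ne_rotate (k i : ℕ) : (fibWord k).rotate i ≠ fibB k := by
  intro h
  obtain ⟨A, B, x, hA, -⟩ := shape k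
  have h1 := (List.rotate_perm (fibWord k) i).count_eq true
  rw [h, fibB_eq hA, hA] at h1
  cases x <;> simp at h1

/-- For every `k ≥ 0`, a word `u` of length `F_k` over `{0,1}` is a factor of the infinite
Fibonacci word `w` (i.e. a contiguous subword of some `s_m`) if and only if `u` is one of the
`F_k` cyclic rotations of `s_k` or `u = b_k`; in particular, the set of factors of `w` of
length `F_k` has exactly `F_k + 1` elements.  (Here `F_k = Nat.fib (k + 2)`.) -/
theorem fibWord_factors_of_length_fib (k : ℕ) :
    (∀ u : List Bool, u.length = Nat.fib (k + 2) →
      ((∃ m, u <:+: fibWord m) ↔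
        (∃ i < Nat.fib (k + 2), u = (fibWord k).rotate i) ∨ u = fibB k)) ∧
    {u : List Bool | u.length = Nat.fib (k + 2) ∧ ∃ m, u <:+: fibWord m}.ncard
      = Nat.fib (k + 2) + 1 := by
  refine ⟨factor_iff k, ?_⟩
  have hset : {u : List Bool | u.length = Nat.fib (k + 2) ∧ ∃ m, u <:+: fibWord m}
      = insert (fibB k) (Set.image (fun i => (fibWord k).rotate i) (Set.Iio (Nat.fib (k + 2)))) := by
    ext u
    simp only [Set.mem_ofPred_eq, Set.mem_insert_iff, Set.mem_image, Set.mem_Iio]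
    constructor
    · rintro ⟨hu, h⟩
      rcases (factor_iff k u hu).1 h with ⟨i, hi, rfl⟩ | h
      · exact Or.inr ⟨i, hi, rfl⟩
      · exact Or.inl h
    · intro h
      have hu : u.length = Nat.fib (k + 2) := by
        rcases h with rfl | ⟨i, hi, rfl⟩
        · obtain ⟨A, B, x, hA, -⟩ := shape k
          rw [← (counts k).1.1, fibB_eq hA, hA]; simp
        · rw [List.length_rotate, (counts k).1.1]
      refine ⟨hu, (factor_iff k u hu).2 ?_⟩
      rcases h with rfl | ⟨i, hi, rfl⟩
      · exact Or.inr rfl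
      · exact Or.inl ⟨i, hi, rfl⟩
  rw [hset, Set.ncard_insert_of_notMem _ ((Set.finite_Iio _).image _),
    Set.InjOn.ncard_image (rotate_injOn k)]
  · rw [Set.ncard_eq_toFinset_card']; simp
  · rintro ⟨i, -, h⟩
    exact fibB_ne_rotate k i h
end

section
/- For every θ ∈ ℝ, at least one of the following holds: for all odd k ≥ 1 the word s_k^θ = v_θ(1) v_θ(2) ... v_θ(F_k) is a cyclic rotation of s_k, or for all even k ≥ 0 the word s_k^θ is a cyclic rotation of s_k. -/
/-- `ω = (√5 - 1)/2`, the inverse of the golden mean. -/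
noncomputable def goldenOmega : ℝ := (Real.sqrt 5 - 1) / 2

/-- The Fibonacci potential sequence: `v_θ(n) = 1` if the fractional part of `nω + θ`
lies in `[1 - ω, 1)`, and `0` otherwise (letters encoded as `Bool`). -/
noncomputable def vTheta (θ : ℝ) (n : ℤ) : Bool :=
  if Int.fract ((n : ℝ) * goldenOmega + θ) ∈ Set.Ico (1 - goldenOmega) 1 then true else false

/-- The word `s_k^θ = v_θ(1) v_θ(2) ... v_θ(F_k)`. -/
noncomputable def sTheta (θ : ℝ) (k : ℕ) : List Bool :=
  (List.range (Nat.fib (k + 2))).map fun i => vTheta θ ((i : ℤ) + 1)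

theorem sTheta_def (θ : ℝ) (k : ℕ) : sTheta θ k =
    (List.range (Nat.fib (k + 2))).map fun i : ℕ => vTheta θ ((i : ℤ) + 1) := by
  unfold sTheta
  generalize List.range (Nat.fib (k + 2)) = l
  induction l with
  | nil => rfl
  | cons a l ih =>
    simp only [List.map_cons]
    rw [← ih]
    rfl

theorem gw_sq : goldenOmega ^ 2 = 1 - goldenOmega := by
  unfold goldenOmega
  have := Real.sq_sqrt (show (0:ℝ) ≤ 5 by norm_num)
  nlinarith

theorem gw_half : 1 / 2 < goldenOmega := by
  unfold goldenOmega
  have : (2:ℝ) < Real.sqrt 5 := by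
    rw [Real.lt_sqrt] <;> norm_num
  linarith

theorem gw_lt : goldenOmega < 1 := by
  have := gw_sq
  have := gw_half
  nlinarith

/-- the approximation error `F_k ω - F_{k-1}` -/
noncomputable def gEps (k : ℕ) : ℝ :=
  (Nat.fib (k + 2) : ℝ) * goldenOmega - (Nat.fib (k + 1) : ℝ)

theorem gEps_eq (k : ℕ) : gEps k = -(-goldenOmega) ^ (k + 2) := by
  have hs := gw_sq
  induction k using Nat.twoStepInduction with
  | zero => simp [gEps]; linarith
  | one =>
    simp [gEps, Nat.fib_add_two]
    linear_combination (-goldenOmega+1) * hs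
  | more n h1 h2 =>
    have e : gEps (n + 2) = gEps n + gEps (n + 1) := by
      unfold gEps
      rw [Nat.fib_add_two (n := n + 2), Nat.fib_add_two (n := n + 1)]
      push_cast
      ring
    rw [e, h1, h2]
    linear_combination (-goldenOmega) ^ (n + 2) * hs

theorem gEps_abs (k : ℕ) : |gEps k| = goldenOmega ^ (k + 2) := by
  rw [gEps_eq, abs_neg, abs_pow, abs_neg, abs_of_pos (by linarith [gw_half])]

theorem gEps_odd {k : ℕ} (h : Odd k) : gEps k = goldenOmega ^ (k + 2) := by
  rw [gEps_eq, Odd.neg_pow (by simpa [parity_simps] using h)]; simp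

theorem gEps_even {k : ℕ} (h : Even k) : gEps k = -goldenOmega ^ (k + 2) := by
  rw [gEps_eq, Even.neg_pow (by simpa [parity_simps] using h)]

theorem gw_pow_fib (k : ℕ) :
    goldenOmega ^ (k + 2) * ((Nat.fib (k + 3) : ℝ) + Nat.fib (k + 2) * goldenOmega) = 1 := by
  have hs := gw_sq
  induction k with
  | zero =>
    simp [Nat.fib_add_two]
    linear_combination (goldenOmega + 1) * hs
  | succ n ih =>
    rw [show n + 1 + 3 = (n + 2) + 2 from rfl, Nat.fib_add_two (n := n + 2)]
    rw [show n + 2 + 1 = n + 3 from rfl, show n + 1 + 2 = n + 3 from rfl]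
    push_cast
    rw [← ih]
    linear_combination goldenOmega ^ (n + 2) * (Nat.fib (n + 3) : ℝ) * hs

theorem gEps_small (k : ℕ) : (Nat.fib (k + 2) : ℝ) * |gEps k| < 1 := by
  have h := gw_pow_fib k
  rw [gEps_abs, ← h]
  have h0 := gw_half
  have hp : 0 < goldenOmega ^ (k + 2) := by positivity
  have h1 : (Nat.fib (k + 2) : ℝ) ≤ Nat.fib (k + 3) := by
    exact_mod_cast Nat.fib_mono (by omega)
  have h2 : (0:ℝ) < Nat.fib (k + 2) := by exact_mod_cast Nat.fib_pos.2 (by omega)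
  have h3 : 0 < (Nat.fib (k + 2) : ℝ) * goldenOmega := by positivity
  nlinarith

theorem gEps_small' (k : ℕ) (hk : 1 ≤ k) : ((Nat.fib (k + 3) : ℝ) + 1) * |gEps k| < 1 := by
  have h := gw_pow_fib k
  rw [gEps_abs]
  have h0 := gw_half
  have hp : 0 < goldenOmega ^ (k + 2) := by positivity
  have h2 : (2:ℝ) ≤ Nat.fib (k + 2) := by
    exact_mod_cast (show Nat.fib 3 ≤ Nat.fib (k + 2) from Nat.fib_mono (by omega))
  have h3 : 1 < (Nat.fib (k + 2) : ℝ) * goldenOmega := by nlinarith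
  nlinarith

/-- Rational approximation of the rotation on `0..F_k`. -/
theorem exists_rational (k : ℕ) (y : ℝ) (h0 : 0 ≤ y) (h1 : y < 1)
    (h2 : 0 ≤ y + gEps k) (h3 : y + gEps k < 1) :
    ∃ r : ℤ, ∀ j : ℕ, j ≤ Nat.fib (k + 2) →
      ⌊(j : ℝ) * goldenOmega + y⌋ = ((j : ℤ) * Nat.fib (k + 1) + r) / Nat.fib (k + 2) := by
  have hsm := gEps_small k
  have hE : (Nat.fib (k + 2) : ℝ) * goldenOmega = Nat.fib (k + 1) + gEps k := by
    unfold gEps; ring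
  have hq : 0 < Nat.fib (k + 2) := Nat.fib_pos.2 (by omega)
  have hcop : Nat.Coprime (Nat.fib (k + 1)) (Nat.fib (k + 2)) := Nat.fib_coprime_fib_succ (k + 1)
  generalize Nat.fib (k + 2) = q at *
  generalize Nat.fib (k + 1) = p at *
  generalize gEps k = ε at *
  have hqR : (0:ℝ) < q := by exact_mod_cast hq
  have hN0 : ⌊((0:ℕ) : ℝ) * goldenOmega + y⌋ = 0 := by
    rw [Int.floor_eq_iff]; push_cast; constructor <;> linarith
  have hNq : ⌊(q : ℝ) * goldenOmega + y⌋ = p := by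
    rw [Int.floor_eq_iff]; push_cast; constructor <;> linarith
  have key : ∀ i j : ℕ, i ≤ q → j ≤ q →
      (q : ℤ) * ⌊(i : ℝ) * goldenOmega + y⌋ - i * p <
        q * ⌊(j : ℝ) * goldenOmega + y⌋ + q - j * p := by
    intro i j hi hj
    by_contra hcon
    push Not at hcon
    have fi := Int.floor_le ((i : ℝ) * goldenOmega + y)
    have fj := Int.lt_floor_add_one ((j : ℝ) * goldenOmega + y)
    have hii : ⌊(i : ℝ) * goldenOmega + y⌋ = ⌊(i : ℝ) * goldenOmega + y⌋ := rfl
    generalize ha : ⌊(i : ℝ) * goldenOmega + y⌋ = a at *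
    generalize hb : ⌊(j : ℝ) * goldenOmega + y⌋ = b at *
    have hiR : (i : ℝ) ≤ q := by exact_mod_cast hi
    have hjR : (j : ℝ) ≤ q := by exact_mod_cast hj
    have hi0 : (0 : ℝ) ≤ i := by positivity
    have hj0 : (0 : ℝ) ≤ j := by positivity
    have hA : ((a : ℝ) - b - 1) < ((i : ℝ) - j) * goldenOmega := by linarith
    have hB : (q : ℝ) * ((a : ℝ) - b - 1) < ((i : ℝ) - j) * p + ((i : ℝ) - j) * ε := by
      have := mul_lt_mul_of_pos_left hA hqR
      calc _ < _ := this
        _ = ((i : ℝ) - j) * ((q : ℝ) * goldenOmega) := by ring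
        _ = _ := by rw [hE]; ring
    have hC : ((i : ℝ) - j) * ε < 1 := by
      calc ((i : ℝ) - j) * ε ≤ |((i : ℝ) - j) * ε| := le_abs_self _
        _ = |(i : ℝ) - j| * |ε| := abs_mul _ _
        _ ≤ q * |ε| := by
          apply mul_le_mul_of_nonneg_right _ (abs_nonneg _)
          rw [abs_le]; constructor <;> linarith
        _ < 1 := hsm
    have hD : (q : ℤ) * (a - b - 1) < ((i : ℤ) - j) * p + 1 := by
      have : (q : ℝ) * ((a : ℝ) - b - 1) < ((i : ℝ) - j) * p + 1 := by linarith
      exact_mod_cast this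
    have hEq : (q : ℤ) * (a - b - 1) = ((i : ℤ) - j) * p := by
      apply le_antisymm
      · omega
      · linarith
    have hdvd : (q : ℤ) ∣ (i : ℤ) - j := by
      have h : (q : ℤ) ∣ ((i : ℤ) - j) * p := ⟨_, hEq.symm⟩
      exact IsCoprime.dvd_of_dvd_mul_right (Nat.isCoprime_iff_coprime.2 hcop.symm) h
    obtain ⟨c, hc⟩ := hdvd
    have hqZ : (0:ℤ) < q := by exact_mod_cast hq
    have hc1 : c ≤ 1 := by
      by_contra h
      have : (q : ℤ) * 2 ≤ q * c := by apply mul_le_mul_of_nonneg_left <;> omega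
      omega
    have hc2 : -1 ≤ c := by
      by_contra h
      have : (q : ℤ) * c ≤ q * (-2) := by apply mul_le_mul_of_nonneg_left <;> omega
      omega
    have hab : a - b - 1 = c * p := by
      rw [hc] at hEq
      have : (q : ℤ) * (a - b - 1) = q * (c * p) := by rw [hEq]; ring
      exact mul_left_cancel₀ hqZ.ne' this
    have hcc : c = -1 ∨ c = 0 ∨ c = 1 := by omega
    rcases hcc with rfl | rfl | rfl
    · have hi' : i = 0 := by omega
      have hj' : j = q := by omega
      subst hi' hj'
      rw [hN0] at ha
      rw [hNq] at hb
      omega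
    · have : i = j := by omega
      subst this
      rw [ha] at hb
      omega
    · have hi' : i = q := by omega
      have hj' : j = 0 := by omega
      subst hi' hj'
      rw [hN0] at hb
      rw [hNq] at ha
      omega
  obtain ⟨i0, hi0, hmax⟩ := Finset.exists_max_image (Finset.range (q + 1))
    (fun i : ℕ => (q : ℤ) * ⌊(i : ℝ) * goldenOmega + y⌋ - i * p) ⟨0, by simp⟩
  refine ⟨(q : ℤ) * ⌊(i0 : ℝ) * goldenOmega + y⌋ - i0 * p, fun j hj => ?_⟩
  have hm := hmax j (by simp; omega)
  have hk := key i0 j (by simp at hi0; omega) hj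

  symm
  rw [Int.ediv_eq_iff_of_pos (by exact_mod_cast hq)]
  constructor <;> nlinarith

/-- Rational mechanical words. -/
def mech (p q : ℕ) (r : ℤ) : List Bool :=
  (List.range q).map fun j : ℕ => decide
    ((((j : ℤ) + 1) * p + r) / (q : ℤ) ≠ ((j : ℤ) * p + r) / (q : ℤ))

theorem mech_rotate (p q : ℕ) (hq : 0 < q) (hc : Nat.Coprime p q) (r r' : ℤ) :
    ∃ i < q, mech p q r' = (mech p q r).rotate i := by
  have hqZ : (q : ℤ) ≠ 0 := by exact_mod_cast hq.ne'
  obtain ⟨u, v, huv⟩ := Nat.isCoprime_iff_coprime.2 hc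
  have hpos := Int.emod_nonneg (u * (r' - r)) hqZ
  have hlt := Int.emod_lt_of_pos (u * (r' - r)) (show (0:ℤ) < q by exact_mod_cast hq)
  have hdm := Int.emod_add_mul_ediv (u * (r' - r)) q
  obtain ⟨i, hi⟩ := Int.eq_ofNat_of_zero_le hpos
  have hiq : i < q := by omega
  rw [hi] at hdm
  refine ⟨i, hiq, ?_⟩
  obtain ⟨t, ht⟩ : ∃ t : ℤ, r' = r + i * p + q * t := by
    refine ⟨v * (r' - r) + (u * (r' - r) / q) * p, ?_⟩
    linear_combination (-(r' - r)) * huv - (p : ℤ) * hdm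
  apply List.ext_getElem
  · simp [mech]
  · intro j h1 h2
    have hj : j < q := by simpa [mech] using h1
    rw [List.getElem_rotate]
    simp only [mech, List.getElem_map, List.getElem_range, List.length_map, List.length_range]
    have hmod := Nat.mod_add_div (j + i) q
    generalize (j + i) % q = m at *
    generalize (j + i) / q = s at *
    have hmZ : (m : ℤ) = j + i - q * s := by
      have : (m : ℤ) + q * s = j + i := by exact_mod_cast hmod
      linarith
    have e1 : ((j : ℤ) + 1) * p + r' = (((m : ℤ) + 1) * p + r) + q * (s * p + t) := by
      rw [ht, hmZ]; ring
    have e2 : (j : ℤ) * p + r' = ((m : ℤ) * p + r) + q * (s * p + t) := by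
      rw [ht, hmZ]; ring
    rw [e1, e2, Int.add_mul_ediv_left _ _ hqZ, Int.add_mul_ediv_left _ _ hqZ]
    simp

theorem vTheta_eq (θ : ℝ) (n : ℤ) : vTheta θ n =
    decide (⌊((n : ℝ) + 1) * goldenOmega + θ⌋ ≠ ⌊(n : ℝ) * goldenOmega + θ⌋) := by
  have hw0 := gw_half
  have hw1 := gw_lt
  unfold vTheta
  have hx : ((n : ℝ) + 1) * goldenOmega + θ = ((n : ℝ) * goldenOmega + θ) + goldenOmega := by ring
  rw [hx]
  generalize (n : ℝ) * goldenOmega + θ = x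
  have hf := Int.floor_add_fract x
  have hf0 := Int.fract_nonneg x
  have hf1 := Int.fract_lt_one x
  by_cases h : 1 - goldenOmega ≤ Int.fract x
  · have : ⌊x + goldenOmega⌋ = ⌊x⌋ + 1 := by
      rw [Int.floor_eq_iff]; push_cast; constructor <;> linarith
    rw [this]
    simp [h, hf1]
  · have : ⌊x + goldenOmega⌋ = ⌊x⌋ := by
      push Not at h
      rw [Int.floor_eq_iff]; constructor <;> linarith
    rw [this]
    simp [h]

theorem sTheta_mech (θ : ℝ) (k : ℕ) (h2 : 0 ≤ Int.fract (θ + goldenOmega) + gEps k)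
    (h3 : Int.fract (θ + goldenOmega) + gEps k < 1) :
    ∃ r : ℤ, sTheta θ k = mech (Nat.fib (k + 1)) (Nat.fib (k + 2)) r := by
  obtain ⟨r, hr⟩ := exists_rational k _ (Int.fract_nonneg _) (Int.fract_lt_one _) h2 h3
  refine ⟨r, ?_⟩
  rw [sTheta_def]
  unfold mech
  apply List.map_congr_left
  intro j hj
  have hj' : j < Nat.fib (k + 2) := by simpa using hj
  have a1 := hr j hj'.le
  have a2 := hr (j + 1) hj'
  rw [vTheta_eq]
  have hf := Int.floor_add_fract (θ + goldenOmega)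
  have e1 : (((j : ℤ) + 1 : ℤ) : ℝ) * goldenOmega + θ =
      (j : ℝ) * goldenOmega + Int.fract (θ + goldenOmega) + (⌊θ + goldenOmega⌋ : ℤ) := by
    push_cast; linarith
  have e2 : ((((j : ℤ) + 1 : ℤ) : ℝ) + 1) * goldenOmega + θ =
      ((j + 1 : ℕ) : ℝ) * goldenOmega + Int.fract (θ + goldenOmega) + (⌊θ + goldenOmega⌋ : ℤ) := by
    push_cast; linarith
  rw [e1, e2, Int.floor_add_intCast, Int.floor_add_intCast, a1, a2]
  push_cast
  simp

theorem fibWord_add_two (k : ℕ) : fibWord (k + 2) = fibWord (k + 1) ++ fibWord k := by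
  induction k with
  | zero => rfl
  | succ n ih =>
    rw [show fibWord (n + 1 + 2) = (fibWord (n + 2)).flatMap fibS from rfl]
    conv_lhs => rw [ih, List.flatMap_append]
    rfl

theorem floor_shift (k n : ℕ) (hk : 1 ≤ k) (hn0 : 1 ≤ n) (hn : n ≤ Nat.fib (k + 1) + 1) :
    ⌊(n : ℝ) * goldenOmega + gEps k⌋ = ⌊(n : ℝ) * goldenOmega⌋ := by
  have hsm := gEps_small' k hk
  have hE : (Nat.fib (k + 2) : ℝ) * goldenOmega = Nat.fib (k + 1) + gEps k := by
    unfold gEps; ring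
  have hF : Nat.fib (k + 3) = Nat.fib (k + 1) + Nat.fib (k + 2) := Nat.fib_add_two
  have hq : 0 < Nat.fib (k + 2) := Nat.fib_pos.2 (by omega)
  rw [hF] at hsm
  push_cast at hsm
  generalize Nat.fib (k + 2) = q at *
  generalize Nat.fib (k + 1) = p at *
  generalize gEps k = ε at *
  have hqR : (0:ℝ) < q := by exact_mod_cast hq
  have hnR : (n : ℝ) ≤ p + 1 := by exact_mod_cast hn
  have hn0R : (1 : ℝ) ≤ n := by exact_mod_cast hn0
  have f1 := Int.floor_le ((n : ℝ) * goldenOmega + ε)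
  have f2 := Int.floor_le ((n : ℝ) * goldenOmega)
  have g1 := Int.lt_floor_add_one ((n : ℝ) * goldenOmega + ε)
  have g2 := Int.lt_floor_add_one ((n : ℝ) * goldenOmega)
  have hid : ∀ a : ℤ, (((n : ℤ) * p - a * q : ℤ) : ℝ) =
      q * ((n : ℝ) * goldenOmega - a) - n * ε := by
    intro a
    push_cast
    linear_combination (-(n : ℝ)) * hE
  have hbd : ((q : ℝ) + n) * |ε| < 1 := by
    have : ((q : ℝ) + n) * |ε| ≤ (p + q + 1) * |ε| :=
      mul_le_mul_of_nonneg_right (by linarith) (abs_nonneg _)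
    linarith
  rcases lt_trichotomy ⌊(n : ℝ) * goldenOmega + ε⌋ ⌊(n : ℝ) * goldenOmega⌋ with h | h | h
  · exfalso
    generalize ⌊(n : ℝ) * goldenOmega⌋ = a at *
    have h' : ((⌊(n : ℝ) * goldenOmega + ε⌋ : ℤ) : ℝ) + 1 ≤ a := by exact_mod_cast h
    have hneg : ε < 0 := by linarith
    rw [abs_of_neg hneg] at hbd
    have hD := hid a
    have l1 : (0 : ℝ) < (((n : ℤ) * p - a * q : ℤ) : ℝ) := by
      rw [hD]; nlinarith
    have l2 : (((n : ℤ) * p - a * q : ℤ) : ℝ) < 1 := by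
      rw [hD]; nlinarith
    have l1' : (0:ℤ) < (n : ℤ) * p - a * q := by exact_mod_cast l1
    have l2' : (n : ℤ) * p - a * q < 1 := by exact_mod_cast l2
    omega
  · exact h
  · exfalso
    generalize ⌊(n : ℝ) * goldenOmega + ε⌋ = a at *
    have h' : ((⌊(n : ℝ) * goldenOmega⌋ : ℤ) : ℝ) + 1 ≤ a := by exact_mod_cast h
    have hpos : 0 < ε := by linarith
    rw [abs_of_pos hpos] at hbd
    have hD := hid a
    have l1 : (((n : ℤ) * p - a * q : ℤ) : ℝ) < 0 := by
      rw [hD]; nlinarith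
    have l2 : (-1 : ℝ) < (((n : ℤ) * p - a * q : ℤ) : ℝ) := by
      rw [hD]; nlinarith
    have l1' : (n : ℤ) * p - a * q < 0 := by exact_mod_cast l1
    have l2' : -1 < (n : ℤ) * p - a * q := by exact_mod_cast l2
    omega

theorem sTheta_zero_add_two (k : ℕ) :
    sTheta 0 (k + 2) = sTheta 0 (k + 1) ++ sTheta 0 k := by
  rw [sTheta_def, sTheta_def, sTheta_def]
  have hF : Nat.fib (k + 2 + 2) = Nat.fib (k + 1 + 2) + Nat.fib (k + 2) := by
    rw [Nat.fib_add_two (n := k + 2), add_comm]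
  rw [hF, List.range_add, List.map_append, List.map_map]
  congr 1
  apply List.map_congr_left
  intro j hj
  have hj' : j < Nat.fib (k + 2) := by simpa using hj
  simp only [Function.comp]
  rw [vTheta_eq, vTheta_eq]
  have a1 := floor_shift (k + 1) (j + 1) (by omega) (by omega) (by
    rw [show k + 1 + 1 = k + 2 from rfl]; omega)
  have a2 := floor_shift (k + 1) (j + 2) (by omega) (by omega) (by
    rw [show k + 1 + 1 = k + 2 from rfl]; omega)
  have hE : (Nat.fib (k + 1 + 2) : ℝ) * goldenOmega = Nat.fib (k + 1 + 1) + gEps (k + 1) := by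
    unfold gEps; ring
  have e1 : (((((Nat.fib (k + 1 + 2) + j : ℕ) : ℤ) + 1 : ℤ)) : ℝ) * goldenOmega + 0 =
      ((j + 1 : ℕ) : ℝ) * goldenOmega + gEps (k + 1) + ((Nat.fib (k + 1 + 1) : ℤ) : ℝ) := by
    push_cast; linarith
  have e2 : ((((((Nat.fib (k + 1 + 2) + j : ℕ) : ℤ) + 1 : ℤ)) : ℝ) + 1) * goldenOmega + 0 =
      ((j + 2 : ℕ) : ℝ) * goldenOmega + gEps (k + 1) + ((Nat.fib (k + 1 + 1) : ℤ) : ℝ) := by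
    push_cast; linarith
  have e3 : ((((j : ℤ) + 1 : ℤ)) : ℝ) * goldenOmega + 0 = ((j + 1 : ℕ) : ℝ) * goldenOmega := by
    push_cast; ring
  have e4 : (((((j : ℤ) + 1 : ℤ)) : ℝ) + 1) * goldenOmega + 0 =
      ((j + 2 : ℕ) : ℝ) * goldenOmega := by
    push_cast; ring
  rw [e1, e2, e3, e4, Int.floor_add_intCast, Int.floor_add_intCast, a1, a2]
  simp

theorem fibWord_eq (k : ℕ) : fibWord k = sTheta 0 k := by
  have hs := gw_sq
  have h0 := gw_half
  have h1 := gw_lt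
  have hv1 : vTheta 0 1 = true := by
    have : Int.fract goldenOmega = goldenOmega := Int.fract_eq_self.2 ⟨by linarith, h1⟩
    simp [vTheta, this]
    constructor <;> linarith
  have hv2 : vTheta 0 2 = false := by
    have : Int.fract (2 * goldenOmega) = 2 * goldenOmega - 1 := by
      rw [Int.fract_eq_iff]
      exact ⟨by linarith, by linarith, 1, by push_cast; ring⟩
    simp [vTheta, this]
    intro h
    nlinarith
  induction k using Nat.twoStepInduction with
  | zero => simp [fibWord, sTheta_def, hv1]
  | one =>
    have : Nat.fib 3 = 2 := rfl
    simp [fibWord, fibS, sTheta_def, this, List.range_succ, hv1, hv2]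
  | more n a b => rw [fibWord_add_two, sTheta_zero_add_two, a, b]

theorem sTheta_rot (θ : ℝ) (k : ℕ) (h2 : 0 ≤ Int.fract (θ + goldenOmega) + gEps k)
    (h3 : Int.fract (θ + goldenOmega) + gEps k < 1) :
    ∃ i < Nat.fib (k + 2), sTheta θ k = (fibWord k).rotate i := by
  have hs := gw_sq
  have w0 := gw_half
  have w1 := gw_lt
  obtain ⟨r', hr'⟩ := sTheta_mech θ k h2 h3
  have hf : Int.fract (0 + goldenOmega) = goldenOmega := by
    rw [zero_add]; exact Int.fract_eq_self.2 ⟨by linarith, w1⟩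
  have hb : 0 ≤ goldenOmega + gEps k ∧ goldenOmega + gEps k < 1 := by
    have hp : 0 < goldenOmega ^ (k + 2) := by positivity
    rcases Nat.even_or_odd k with h | h
    · rw [gEps_even h]
      have : goldenOmega ^ (k + 2) ≤ goldenOmega ^ 2 :=
        pow_le_pow_of_le_one (by linarith) w1.le (by omega)
      constructor <;> linarith
    · rw [gEps_odd h]
      have : goldenOmega ^ (k + 2) ≤ goldenOmega ^ 3 :=
        pow_le_pow_of_le_one (by linarith) w1.le (by have := h.pos; omega)
      constructor <;> nlinarith
  obtain ⟨r, hr⟩ := sTheta_mech 0 k (by rw [hf]; exact hb.1) (by rw [hf]; exact hb.2)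
  rw [fibWord_eq, hr, hr']
  exact mech_rotate _ _ (Nat.fib_pos.2 (by omega)) (Nat.fib_coprime_fib_succ (k + 1)) _ _

/-- For every `θ ∈ ℝ`, either for all odd `k ≥ 1` the word `s_k^θ` is a cyclic rotation of
`s_k`, or for all even `k ≥ 0` the word `s_k^θ` is a cyclic rotation of `s_k`.
(Here `u.rotate i = u_{i+1} ... u_n u_1 ... u_i` and `F_k = Nat.fib (k + 2)`.) -/
theorem sTheta_cyclic_rotation (θ : ℝ) :
    (∀ k, Odd k → ∃ i < Nat.fib (k + 2), sTheta θ k = (fibWord k).rotate i) ∨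
    (∀ k, Even k → ∃ i < Nat.fib (k + 2), sTheta θ k = (fibWord k).rotate i) := by
  have hs := gw_sq
  have w0 := gw_half
  have w1 := gw_lt
  have hb : ∀ k : ℕ, 0 < goldenOmega ^ (k + 2) ∧ goldenOmega ^ (k + 2) < 1 / 2 := by
    intro k
    have : goldenOmega ^ (k + 2) ≤ goldenOmega ^ 2 :=
      pow_le_pow_of_le_one (by linarith) w1.le (by omega)
    exact ⟨by positivity, by linarith⟩
  have f0 := Int.fract_nonneg (θ + goldenOmega)
  have f1 := Int.fract_lt_one (θ + goldenOmega)
  rcases lt_or_ge (Int.fract (θ + goldenOmega)) (1 / 2) with h | h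
  · left
    intro k hk
    obtain ⟨b1, b2⟩ := hb k
    apply sTheta_rot <;> rw [gEps_odd hk] <;> linarith
  · right
    intro k hk
    obtain ⟨b1, b2⟩ := hb k
    apply sTheta_rot <;> rw [gEps_even hk] <;> linarith
end
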